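/- Let γ ∈ [0, π/4], let a ∈ {0,1}, and let n = (n₁,n₂,n₃) ∈ ℝ³ be a unit vector. Let p = ⟨ψ^γ| (A⊗1₂) |ψ^γ⟩ be the marginal probability of the projective qubit measurement element A = (1/2)·(1₂ + (−1)^a·(n₁σ₁ + n₂σ₂ + n₃σ₃)) on the state |ψ^γ⟩. Then the concurrence of |ψ^γ⟩ is bounded from above by this marginal: sin(2γ) ≤ √(1 − (1 − 2p)²). -/

import Mathlib

open Matrix
open scoped Kronecker

/-- The two-qubit pure state `|ψ^γ⟩ = cos γ |00⟩ + sin γ |11⟩` as a vector. -/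
noncomputable def schmidtVec (γ : ℝ) : Fin 2 × Fin 2 → ℂ :=
  fun jk =>
    if jk = (0, 0) then (Real.cos γ : ℂ)
    else if jk = (1, 1) then (Real.sin γ : ℂ) else 0

/-- The Pauli matrix σ₁. -/
def pauli1 : Matrix (Fin 2) (Fin 2) ℂ := !![0, 1; 1, 0]

/-- The Pauli matrix σ₂. -/
def pauli2 : Matrix (Fin 2) (Fin 2) ℂ := !![0, -Complex.I; Complex.I, 0]

/-- The Pauli matrix σ₃. -/
def pauli3 : Matrix (Fin 2) (Fin 2) ℂ := !![1, 0; 0, -1]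

/-- The projective qubit measurement element
`A = (1/2)(1₂ + (−1)^a (n₁σ₁ + n₂σ₂ + n₃σ₃))`. -/
noncomputable def projElem (a : Fin 2) (n : Fin 3 → ℝ) : Matrix (Fin 2) (Fin 2) ℂ :=
  (1 / 2 : ℂ) • ((1 : Matrix (Fin 2) (Fin 2) ℂ) +
    ((-1 : ℂ) ^ (a : ℕ)) • ((n 0 : ℂ) • pauli1 + (n 1 : ℂ) • pauli2 + (n 2 : ℂ) • pauli3))

/-- the concurrence `sin 2γ` of `|ψ^γ⟩` is bounded from above by the
marginal probability `p` of any projective measurement element: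
`sin 2γ ≤ √(1 − (1 − 2p)²)`. -/
theorem concurrence_le_of_projective_marginal
    (γ : ℝ) (hγ₀ : 0 ≤ γ) (hγ₁ : γ ≤ Real.pi / 4)
    (a : Fin 2) (n : Fin 3 → ℝ) (hn : n 0 ^ 2 + n 1 ^ 2 + n 2 ^ 2 = 1)
    (p : ℝ)
    (hp : (star (schmidtVec γ) ⬝ᵥ
        ((projElem a n ⊗ₖ (1 : Matrix (Fin 2) (Fin 2) ℂ)) *ᵥ schmidtVec γ)) = (p : ℂ)) :
    Real.sin (2 * γ) ≤ Real.sqrt (1 - (1 - 2 * p) ^ 2) := by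
  obtain ⟨e, he, hE⟩ : ∃ e : ℝ, e ^ 2 = 1 ∧ ((-1 : ℂ) ^ (a : ℕ)) = (e : ℂ) := by
    refine ⟨(-1) ^ (a : ℕ), ?_, by push_cast; rfl⟩
    rw [← pow_mul, mul_comm, pow_mul]; norm_num
  have hp' : p = Real.cos γ ^ 2 * (1 + e * n 2) / 2 + Real.sin γ ^ 2 * (1 - e * n 2) / 2 := by
    have h2 : (p : ℂ) = ((Real.cos γ ^ 2 * (1 + e * n 2) / 2
        + Real.sin γ ^ 2 * (1 - e * n 2) / 2 : ℝ) : ℂ) := by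
      rw [← hp]
      simp only [dotProduct, mulVec, Fintype.sum_prod_type, Fin.sum_univ_two, projElem, hE]
      simp [schmidtVec, pauli1, pauli2, pauli3, Matrix.one_apply, -Complex.ofReal_cos,
        -Complex.ofReal_sin]
      ring
    exact_mod_cast h2
  have hcs := Real.sin_sq_add_cos_sq γ
  have h1 : 1 - 2 * p = -(e * n 2 * Real.cos (2 * γ)) := by
    rw [hp', Real.cos_two_mul]
    linear_combination (e * n 2 - 1) * hcs
  apply Real.le_sqrt_of_sq_le
  have h3 : (1 - 2 * p) ^ 2 = n 2 ^ 2 * Real.cos (2 * γ) ^ 2 := by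
    rw [h1]
    linear_combination (n 2 ^ 2 * Real.cos (2 * γ) ^ 2) * he
  have h4 := Real.sin_sq_add_cos_sq (2 * γ)
  have h5 : n 2 ^ 2 ≤ 1 := by nlinarith [sq_nonneg (n 0), sq_nonneg (n 1)]
  nlinarith [mul_le_mul_of_nonneg_right h5 (sq_nonneg (Real.cos (2 * γ)))]
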